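/- Let κ be an inaccessible cardinal such that the set {λ < κ : λ is inaccessible} is bounded below κ (κ is a 'successor inaccessible'). Then (V_κ,∈) has no proper elementary end extension (N,∈) with N a transitive set. -/

import Mathlib

/-!
Call `w ∈ A` a level of a transitive class `A` if it belongs to a set `h` each of whose members `v`
satisfies `v = {x ∈ A | ∃ u ∈ h ∩ v, x ⊆ u}`; a level is then `V_α ∩ A` with `α` its own rank. This
is first-order, and `V_κ` satisfies "each set has the same rank as some level". A proper elementary
end extension `A` of `V_κ` contains a set of rank `κ`, hence contains `V_κ` itself, as a level.

Inaccessibility of `α` is a first-order property of the set `V_α`: it contains each of its subsets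
`F` that is no larger than one of its elements. Given `μ < κ`, the class `A` therefore satisfies
"some level with this closure property has `V_μ` as an element". By elementarity so does `V_κ`, and
the level found there is `V_λ` for an inaccessible `λ` with `μ < λ < κ`.
-/

open FirstOrder Language

/-- Relation symbols of the language of set theory: one binary symbol for membership. -/
inductive memRelSym : ℕ → Type
  | mem : memRelSym 2

/-- The first-order language `L∈` of set theory, with a single binary relation symbol. -/
def LIn : FirstOrder.Language := ⟨fun _ => Empty, memRelSym⟩

/-- The membership symbol of `L∈`. -/
abbrev memSymb : LIn.Relations 2 := memRelSym.mem

/-- Any class of ZF-sets is an `L∈`-structure with true membership. -/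
instance memStructure (A : Set ZFSet) : LIn.Structure A where
  funMap := fun f _ => f.elim
  RelMap := fun r v => match r with | .mem => (v 0).val ∈ (v 1).val

/-- The interpretation of the membership symbol in an arbitrary `L∈`-structure. -/
def memRel {N : Type*} [LIn.Structure N] (x y : N) : Prop :=
  Structure.RelMap memSymb ![x, y]

/-- The class of sets of rank `< o`, i.e. the level `V_o` of the cumulative hierarchy. -/
def Vclass (o : Ordinal) : Set ZFSet := {x | x.rank < o}

/-- `(B,∈)` is a proper elementary end extension of `(A,∈)` (both with true membership):
`A ⊆ B`, `A ≠ B`, no element of `A` gains new members, and the inclusion is elementary. -/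
def IsProperEEESets (A B : Set ZFSet) : Prop :=
  ∃ h : A ⊆ B, A ≠ B ∧
    (∀ a ∈ A, ∀ b ∈ B, b ∈ a → b ∈ A) ∧
    ∀ (n : ℕ) (φ : LIn.Formula (Fin n)) (v : Fin n → A),
      Formula.Realize φ (Set.inclusion h ∘ v) ↔ Formula.Realize φ v

open ZFSet Order

universe u

variable {A : Set ZFSet.{u}} {x w F : ZFSet.{u}} {α o : Ordinal.{u}} {n : ℕ}

/-- A class of sets is transitive if it contains the members of its members. -/
def IsTransitiveClass (A : Set ZFSet.{u}) : Prop :=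
  ∀ ⦃x⦄, x ∈ A → ∀ ⦃y⦄, y ∈ x → y ∈ A

theorem isTransitiveClass_Vclass (o : Ordinal.{u}) : IsTransitiveClass (Vclass o) :=
  fun _ hx _ hy => (rank_lt_of_mem hy).trans hx

theorem vonNeumann_mem_Vclass : V_ α ∈ Vclass o ↔ α < o := by
  rw [Vclass, Set.mem_ofPred_eq, rank_vonNeumann]

theorem IsTransitiveClass.exists_rank_eq (hA : IsTransitiveClass A) (h : ¬A ⊆ Vclass o) :
    ∃ e ∈ A, e.rank = o := by
  obtain ⟨e, ⟨heA, heo⟩, hmin⟩ := mem_wf.has_min {e | e ∈ A ∧ e ∉ Vclass o} (Set.not_subset.1 h)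
  have hle : e.rank ≤ o := rank_le_iff.2 fun z hz => by
    by_contra hzo
    exact hmin z ⟨hA heA hz, hzo⟩ hz
  exact ⟨e, heA, hle.antisymm (not_lt.1 heo)⟩

/-- The inclusion of `A` into a proper elementary end extension `B`, as an elementary embedding. -/
def IsProperEEESets.inclusion {A B : Set ZFSet.{u}} (h : IsProperEEESets A B) : A ↪ₑ[LIn] B where
  toFun := Set.inclusion h.fst
  map_formula' := h.snd.2.2

theorem IsProperEEESets.realize_iff {A B : Set ZFSet.{u}} (h : IsProperEEESets A B)
    (φ : LIn.BoundedFormula Empty n) (xs : Fin n → A) :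
    φ.Realize (default : Empty → B) (Set.inclusion h.fst ∘ xs) ↔
      φ.Realize (default : Empty → A) xs := by
  rw [← h.inclusion.map_boundedFormula φ default xs]
  rw [Subsingleton.elim (default : Empty → B)]
  rfl

/-- A history in `A`: a set `h` each of whose members `w` consists of the `x ∈ A` that are included
in some member of `h ∩ w`. -/
def IsHistory (A : Set ZFSet.{u}) (h : ZFSet.{u}) : Prop :=
  ∀ w ∈ h, ∀ x ∈ A, x ∈ w ↔ ∃ u ∈ h, u ∈ w ∧ x ⊆ u

/-- A level of `A`: a member of a history that belongs to `A`. These are the sets `V_ α ∩ A` that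
`A` recognizes as levels of the cumulative hierarchy. -/
def IsLevel (A : Set ZFSet.{u}) (w : ZFSet.{u}) : Prop :=
  ∃ h ∈ A, w ∈ h ∧ IsHistory A h

theorem IsHistory.mem_iff_rank_lt {h : ZFSet.{u}} (hA : IsTransitiveClass A) (hhA : h ∈ A)
    (hh : IsHistory A h) (hw : w ∈ h) (hx : x ∈ A) : x ∈ w ↔ x.rank < w.rank := by
  induction w using ZFSet.inductionOn generalizing x with
  | _ w ih =>
    refine ⟨rank_lt_of_mem, fun hlt => ?_⟩
    obtain ⟨y, hyw, hxy⟩ := lt_rank_iff.1 hlt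
    obtain ⟨v, hvh, hvw, hyv⟩ := (hh w hw y (hA (hA hhA hw) hyw)).1 hyw
    have hxv : x.rank ≤ v.rank := hxy.trans (rank_mono hyv)
    exact (hh w hw x hx).2
      ⟨v, hvh, hvw, fun z hz => (ih v hvw hvh (hA hx hz)).2 ((rank_lt_of_mem hz).trans_le hxv)⟩

theorem IsLevel.mem_iff_rank_lt (hA : IsTransitiveClass A) (hw : IsLevel A w) (hx : x ∈ A) :
    x ∈ w ↔ x.rank < w.rank :=
  let ⟨_, hhA, hwh, hh⟩ := hw
  hh.mem_iff_rank_lt hA hhA hwh hx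

theorem IsLevel.rank_eq (hA : IsTransitiveClass A) (hw : IsLevel A w) (hx : x ∈ A) (hxw : x ⊆ w)
    (hxw' : x ∉ w) : w.rank = x.rank :=
  (not_lt.1 fun hlt => hxw' ((hw.mem_iff_rank_lt hA hx).2 hlt)).antisymm (rank_mono hxw)

theorem IsLevel.eq_vonNeumann (hA : IsTransitiveClass A) (hw : IsLevel A w)
    (hwA : Vclass w.rank ⊆ A) : w = V_ w.rank := by
  ext z
  rw [mem_vonNeumann]
  exact ⟨rank_lt_of_mem, fun hz => (hw.mem_iff_rank_lt hA (hwA hz)).2 hz⟩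

/-- The set of all `V_ β` with `β < o`. -/
noncomputable def levelsBelow (o : Ordinal.{u}) : ZFSet.{u} :=
  (V_ o).sep (· ∈ Set.range vonNeumann)

theorem mem_levelsBelow : x ∈ levelsBelow o ↔ ∃ β < o, V_ β = x := by
  rw [levelsBelow, mem_sep]
  constructor
  · rintro ⟨hβ, β, rfl⟩
    exact ⟨β, vonNeumann_mem_vonNeumann_iff.1 hβ, rfl⟩
  · rintro ⟨β, hβ, rfl⟩
    exact ⟨vonNeumann_mem_of_lt hβ, β, rfl⟩

theorem rank_levelsBelow_le (o : Ordinal.{u}) : (levelsBelow o).rank ≤ o :=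
  subset_vonNeumann.1 sep_subset

theorem isHistory_levelsBelow (A : Set ZFSet.{u}) (o : Ordinal.{u}) :
    IsHistory A (levelsBelow o) := by
  intro w hw x _
  obtain ⟨β, hβ, rfl⟩ := mem_levelsBelow.1 hw
  constructor
  · intro hx
    have hxβ := mem_vonNeumann.1 hx
    exact ⟨V_ x.rank, mem_levelsBelow.2 ⟨_, hxβ.trans hβ, rfl⟩, vonNeumann_mem_of_lt hxβ,
      subset_vonNeumann_self x⟩
  · rintro ⟨v, -, hv, hxv⟩
    exact mem_vonNeumann_of_subset hxv hv

theorem isLevel_vonNeumann (hα : succ α < o) : IsLevel (Vclass o) (V_ α) :=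
  ⟨levelsBelow (succ α), (rank_levelsBelow_le _).trans_lt hα,
    mem_levelsBelow.2 ⟨α, lt_succ α, rfl⟩, isHistory_levelsBelow _ _⟩

/-- `A` has levels of every rank: each member of `A` has the same rank as some level of `A`. The
equality of ranks is expressed by the level `w` including but not containing the given set. -/
def HasLevels (A : Set ZFSet.{u}) : Prop :=
  ∀ x ∈ A, ∃ w ∈ A, IsLevel A w ∧ x ⊆ w ∧ x ∉ w

theorem hasLevels_Vclass (ho : IsSuccLimit o) : HasLevels (Vclass o) := fun x hx =>
  ⟨V_ x.rank, vonNeumann_mem_Vclass.2 hx, isLevel_vonNeumann (ho.succ_lt hx),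
    subset_vonNeumann_self x, fun h => (mem_vonNeumann.1 h).false⟩

theorem HasLevels.exists_isLevel_rank_eq (hA : IsTransitiveClass A) (h : HasLevels A)
    (hx : x ∈ A) : ∃ w ∈ A, IsLevel A w ∧ w.rank = x.rank :=
  let ⟨w, hwA, hw, hxw, hxw'⟩ := h x hx
  ⟨w, hwA, hw, hw.rank_eq hA hx hxw hxw'⟩

/-- `x` labels the members of `F`: each `c ∈ F` has an element in `x` that lies in no other member
of `F`. This witnesses `|F| ≤ |x|` without ordered pairs. -/
def Labels (x F : ZFSet.{u}) : Prop :=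
  ∀ c ∈ F, ∃ a ∈ x, a ∈ c ∧ ∀ d ∈ F, a ∈ d → d = c

theorem Labels.card_le (h : Labels x F) : F.card ≤ x.card := by
  choose! label hlabel hmem huniq using h
  have hinj : Function.Injective fun c : F => (⟨label c, hlabel c c.2⟩ : x) := fun c d hcd => by
    have hlabel_eq : label c = label d := congrArg Subtype.val hcd
    exact Subtype.ext (huniq d d.2 c c.2 (hlabel_eq ▸ hmem c c.2))
  rw [← Cardinal.lift_le.{u + 1}, ← cardinalMk_coe_sort, ← cardinalMk_coe_sort]
  exact Cardinal.mk_le_of_injective hinj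

theorem labels_singleton_self {y : ZFSet.{u}} (hy : y ∈ x) : Labels x {x} := by
  intro c hc
  rw [mem_singleton.1 hc]
  exact ⟨y, hy, hy, fun d hd _ => mem_singleton.1 hd⟩

theorem labels_range_pair {ι : Type u} {a b : ι → ZFSet.{u}} (ha : Function.Injective a)
    (hax : ∀ i, a i ∈ x) (hbx : ∀ i, b i ∉ x) : Labels x (range fun i => {a i, b i}) := by
  intro c hc
  obtain ⟨i, rfl⟩ := mem_range.1 hc
  refine ⟨a i, hax i, mem_pair.2 (.inl rfl), fun d hd hid => ?_⟩
  obtain ⟨j, rfl⟩ := mem_range.1 hd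
  have hij : a i = a j := (mem_pair.1 hid).resolve_right fun h => hbx j (h ▸ hax i)
  rw [ha hij]

/-- `w` contains each of its subsets in `A` whose members are labelled by some `x ∈ w`. When
`w = V_ α` with `ω < α` and `A` contains all subsets of `w`, this says that `α` is inaccessible. -/
def IsSmallClosed (A : Set ZFSet.{u}) (w : ZFSet.{u}) : Prop :=
  ∀ x ∈ w, ∀ F ∈ A, F ⊆ w → Labels x F → F ∈ w

theorem mem_vonNeumann_of_card_lt_cof (hsub : x ⊆ V_ α) (hx : x.card < α.cof) : x ∈ V_ α := by
  have hrange : range (fun i : Shrink x => ((equivShrink x).symm i).1) = x := by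
    ext z
    rw [mem_range, (equivShrink x).symm.exists_congr_left]
    simp
  rw [mem_vonNeumann, ← hrange, rank_range]
  exact Ordinal.iSup_add_one_lt_of_lt_cof hx fun i => mem_vonNeumann.1 (hsub (Subtype.prop _))

theorem card_lt_of_mem_vonNeumann_ord {κ : Cardinal.{u}} (hκ : κ.IsInaccessible)
    (hx : x ∈ V_ κ.ord) : x.card < κ :=
  calc
    x.card ≤ (V_ x.rank).card := card_mono (subset_vonNeumann_self x)
    _ = Cardinal.preBeth x.rank := card_vonNeumann _
    _ < Cardinal.preBeth κ.ord := Cardinal.preBeth_strictMono (mem_vonNeumann.1 hx)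
    _ = κ := hκ.preBeth_ord

theorem isSmallClosed_vonNeumann_ord {κ : Cardinal.{u}} (hκ : κ.IsInaccessible)
    (A : Set ZFSet.{u}) : IsSmallClosed A (V_ κ.ord) := fun x hx F _ hF hxF =>
  mem_vonNeumann_of_card_lt_cof hF <| by
    rw [hκ.isRegular.cof_ord]
    exact hxF.card_le.trans_lt (card_lt_of_mem_vonNeumann_ord hκ hx)

theorem exists_cofinal_family (α : Ordinal.{u}) : ∃ (ι : Type u) (f : ι → Ordinal.{u}),
    Cardinal.mk ι = α.cof ∧ (∀ i, f i < α) ∧ ∀ β < α, ∃ i, β ≤ f i := by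
  obtain ⟨s, hs, hcard⟩ := exists_cof_eq α.ToType
  refine ⟨s, fun i => (Ordinal.ToType.mk.symm i.1).1, by rw [hcard, Ordinal.cof_toType],
    fun i => (Ordinal.ToType.mk.symm i.1).2, fun β hβ => ?_⟩
  obtain ⟨i, hi, hle⟩ := hs (Ordinal.ToType.mk ⟨β, hβ⟩)
  exact ⟨⟨i, hi⟩, (OrderIso.le_symm_apply _).2 hle⟩

section SmallClosed

variable (hA : Vclass (succ α) ⊆ A) (hclosed : IsSmallClosed A (V_ α))
include hA hclosed

theorem IsSmallClosed.mem_of_labels (hx : x ∈ V_ α) (hF : F ⊆ V_ α) (hxF : Labels x F) :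
    F ∈ V_ α :=
  hclosed x hx F (hA (lt_succ_of_le (subset_vonNeumann.1 hF))) hF hxF

theorem IsSmallClosed.isSuccLimit (hα : 1 < α) : IsSuccLimit α := by
  refine Ordinal.isSuccLimit_iff.2
    ⟨(zero_lt_one.trans hα).ne', isSuccPrelimit_of_succ_lt fun β hβ => ?_⟩
  have hmem : V_ (max β 1) ∈ V_ α := vonNeumann_mem_of_lt (max_lt hβ hα)
  have hempty : ∅ ∈ V_ (max β 1) := by simp [mem_vonNeumann]
  have hsingleton : {V_ (max β 1)} ∈ V_ α :=
    hclosed.mem_of_labels hA hmem (fun c hc => by rwa [mem_singleton.1 hc])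
      (labels_singleton_self hempty)
  rw [mem_vonNeumann, rank_singleton, rank_vonNeumann] at hsingleton
  exact (succ_le_succ (le_max_left β 1)).trans_lt hsingleton

theorem IsSmallClosed.card_lt_cof (hα : 1 < α) (hx : x ∈ V_ α) : x.card < α.cof := by
  have hlim := hclosed.isSuccLimit hA hα
  have hxα := mem_vonNeumann.1 hx
  obtain ⟨ι, f, hι, hfα, hcof⟩ := exists_cofinal_family α
  by_contra! hle
  obtain ⟨e⟩ : Nonempty (ι ↪ Shrink x) := by rwa [← hι] at hle
  let a (i : ι) : ZFSet := ((equivShrink x).symm (e i)).1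
  have ha (i : ι) : a i ∈ x := ((equivShrink x).symm (e i)).2
  have ha_inj : Function.Injective a :=
    Subtype.val_injective.comp ((equivShrink x).symm.injective.comp e.injective)
  -- The ranks of the `b i` are cofinal in `α`, so the pairs `{a i, b i}`, which `x` labels by the
  -- `a i`, form a set that cannot belong to `V_ α`.
  let b (i : ι) : ZFSet := insert x (V_ (f i))
  have hb (i : ι) : b i ∉ x := mem_asymm (mem_insert x _)
  have hbα (i : ι) : (b i).rank < α := by
    rw [rank_insert, rank_vonNeumann]
    exact max_lt (hlim.succ_lt hxα) (hfα i)
  have hsub : range (fun i => ({a i, b i} : ZFSet)) ⊆ V_ α := fun c hc => by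
    obtain ⟨i, rfl⟩ := mem_range.1 hc
    rw [mem_vonNeumann, rank_pair]
    exact max_lt (hlim.succ_lt ((rank_lt_of_mem (ha i)).trans hxα)) (hlim.succ_lt (hbα i))
  have hmem := hclosed.mem_of_labels hA hx hsub (labels_range_pair ha_inj ha hb)
  obtain ⟨i, hi⟩ := hcof _ (mem_vonNeumann.1 hmem)
  refine hi.not_gt ?_
  calc
    f i = (V_ (f i)).rank := (rank_vonNeumann _).symm
    _ ≤ (b i).rank := rank_mono fun _ => mem_insert_of_mem x
    _ < ({a i, b i} : ZFSet).rank := rank_lt_of_mem (mem_pair.2 (.inr rfl))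
    _ < _ := rank_lt_of_mem (mem_range_self i)

theorem IsSmallClosed.ord_cof_eq (hα : 1 < α) : α.cof.ord = α := by
  refine (Ordinal.ord_cof_le α).antisymm ?_
  by_contra! hlt
  have hcard : α.cof ≤ (V_ α.cof.ord).card := by
    simpa using Ordinal.card_le_card_vonNeumann α.cof.ord
  exact (hclosed.card_lt_cof hA hα (vonNeumann_mem_of_lt hlt)).not_ge hcard

theorem IsSmallClosed.isInaccessible_cof (hα : Ordinal.omega0 < α) : α.cof.IsInaccessible := by
  have hα₁ : 1 < α := Ordinal.one_lt_omega0.trans hα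
  have hord := hclosed.ord_cof_eq hA hα₁
  refine ⟨?_, (Ordinal.cof_ord_cof α).ge, fun ν hν => ?_⟩
  · rwa [← Cardinal.ord_lt_ord, hord, Cardinal.ord_aleph0]
  have hνα : ν.ord < α := hord ▸ Cardinal.ord_lt_ord.2 hν
  have hpow : powerset (V_ ν.ord) ∈ V_ α := by
    rw [← vonNeumann_add_one]
    exact vonNeumann_mem_of_lt ((hclosed.isSuccLimit hA hα₁).succ_lt hνα)
  calc
    2 ^ ν ≤ 2 ^ (V_ ν.ord).card := Cardinal.power_le_power_left two_ne_zero <| by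
      simpa using Ordinal.card_le_card_vonNeumann ν.ord
    _ = (powerset (V_ ν.ord)).card := (card_powerset _).symm
    _ < α.cof := hclosed.card_lt_cof hA hα₁ hpow

end SmallClosed

section Formulas

variable {v : Empty → A} {xs : Fin n → A}

/-- The formula `x ∈ y`. -/
def memFormula (x y : Fin n) : LIn.BoundedFormula Empty n :=
  memSymb.boundedFormula₂ (&x) (&y)

/-- The bounded quantifier `∀ y ∈ x, φ`, binding the last variable of `φ`. -/
def ballFormula (x : Fin n) (φ : LIn.BoundedFormula Empty (n + 1)) : LIn.BoundedFormula Empty n :=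
  ∀' (memFormula (Fin.last n) x.castSucc ⟹ φ)

/-- The bounded quantifier `∃ y ∈ x, φ`, binding the last variable of `φ`. -/
def bexFormula (x : Fin n) (φ : LIn.BoundedFormula Empty (n + 1)) : LIn.BoundedFormula Empty n :=
  ∃' (memFormula (Fin.last n) x.castSucc ⊓ φ)

theorem realize_memFormula (x y : Fin n) :
    (memFormula x y).Realize v xs ↔ (xs x).1 ∈ (xs y).1 := by
  rw [memFormula, BoundedFormula.realize_rel₂]
  rfl

theorem realize_ballFormula (hA : IsTransitiveClass A) (x : Fin n)
    (φ : LIn.BoundedFormula Empty (n + 1)) : (ballFormula x φ).Realize v xs ↔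
      ∀ y, ∀ hy : y ∈ (xs x).1, φ.Realize v (Fin.snoc xs ⟨y, hA (xs x).2 hy⟩) := by
  simp only [ballFormula, BoundedFormula.realize_all, BoundedFormula.realize_imp,
    realize_memFormula, Fin.snoc_last, Fin.snoc_castSucc]
  exact ⟨fun h y hy => h ⟨y, hA (xs x).2 hy⟩ hy, fun h y hy => h y.1 hy⟩

theorem realize_bexFormula (hA : IsTransitiveClass A) (x : Fin n)
    (φ : LIn.BoundedFormula Empty (n + 1)) : (bexFormula x φ).Realize v xs ↔
      ∃ y, ∃ hy : y ∈ (xs x).1, φ.Realize v (Fin.snoc xs ⟨y, hA (xs x).2 hy⟩) := by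
  simp only [bexFormula, BoundedFormula.realize_ex, BoundedFormula.realize_inf,
    realize_memFormula, Fin.snoc_last, Fin.snoc_castSucc]
  exact ⟨fun ⟨y, hy, h⟩ => ⟨y.1, hy, h⟩, fun ⟨y, hy, h⟩ => ⟨⟨y, hA (xs x).2 hy⟩, hy, h⟩⟩

/-- The formula `x ⊆ y`. -/
def subsetFormula (x y : Fin n) : LIn.BoundedFormula Empty n :=
  ballFormula x (memFormula (Fin.last n) y.castSucc)

theorem realize_subsetFormula (hA : IsTransitiveClass A) (x y : Fin n) :
    (subsetFormula x y).Realize v xs ↔ (xs x).1 ⊆ (xs y).1 := by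
  simp only [subsetFormula, realize_ballFormula hA, realize_memFormula, Fin.snoc_last,
    Fin.snoc_castSucc]
  rfl

/-- The formula `∃ u ∈ h, u ∈ w ∧ x ⊆ u`. -/
def subsetMemFormula (h w x : Fin n) : LIn.BoundedFormula Empty n :=
  bexFormula h (memFormula (Fin.last n) w.castSucc ⊓ subsetFormula x.castSucc (Fin.last n))

theorem realize_subsetMemFormula (hA : IsTransitiveClass A) (h w x : Fin n) :
    (subsetMemFormula h w x).Realize v xs ↔
      ∃ u ∈ (xs h).1, u ∈ (xs w).1 ∧ (xs x).1 ⊆ u := by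
  simp only [subsetMemFormula, realize_bexFormula hA, BoundedFormula.realize_inf,
    realize_memFormula, realize_subsetFormula hA, Fin.snoc_last, Fin.snoc_castSucc, exists_prop]

/-- The formula `IsHistory A h`. -/
def historyFormula (h : Fin n) : LIn.BoundedFormula Empty n :=
  ballFormula h (∀' (memFormula (Fin.last (n + 1)) (Fin.last n).castSucc ⇔
    subsetMemFormula h.castSucc.castSucc (Fin.last n).castSucc (Fin.last (n + 1))))

theorem realize_historyFormula (hA : IsTransitiveClass A) (h : Fin n) :
    (historyFormula h).Realize v xs ↔ IsHistory A (xs h).1 := by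
  simp only [historyFormula, realize_ballFormula hA, BoundedFormula.realize_all,
    BoundedFormula.realize_iff, realize_memFormula, realize_subsetMemFormula hA, Fin.snoc_last,
    Fin.snoc_castSucc, Subtype.forall, IsHistory]

/-- The formula `IsLevel A w`. -/
def levelFormula (w : Fin n) : LIn.BoundedFormula Empty n :=
  ∃' (memFormula w.castSucc (Fin.last n) ⊓ historyFormula (Fin.last n))

theorem realize_levelFormula (hA : IsTransitiveClass A) (w : Fin n) :
    (levelFormula w).Realize v xs ↔ IsLevel A (xs w).1 := by
  simp only [levelFormula, BoundedFormula.realize_ex, BoundedFormula.realize_inf,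
    realize_memFormula, realize_historyFormula hA, Fin.snoc_last, Fin.snoc_castSucc,
    Subtype.exists, exists_prop, IsLevel]

/-- The sentence `HasLevels A`. -/
def hasLevelsSentence : LIn.BoundedFormula Empty 0 :=
  ∀' ∃' (levelFormula (Fin.last 1) ⊓ subsetFormula (Fin.last 0).castSucc (Fin.last 1) ⊓
    ∼(memFormula (Fin.last 0).castSucc (Fin.last 1)))

theorem realize_hasLevelsSentence (hA : IsTransitiveClass A) {xs : Fin 0 → A} :
    hasLevelsSentence.Realize v xs ↔ HasLevels A := by
  simp only [hasLevelsSentence, BoundedFormula.realize_all, BoundedFormula.realize_ex,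
    BoundedFormula.realize_inf, BoundedFormula.realize_not, realize_levelFormula hA,
    realize_subsetFormula hA, realize_memFormula, Fin.snoc_last, Fin.snoc_castSucc, Subtype.forall,
    Subtype.exists, exists_prop, and_assoc, HasLevels]

/-- The formula `Labels x F`. -/
def labelsFormula (x F : Fin n) : LIn.BoundedFormula Empty n :=
  ballFormula F <| bexFormula x.castSucc <|
    memFormula (Fin.last (n + 1)) (Fin.last n).castSucc ⊓
      ballFormula F.castSucc.castSucc
        (memFormula (Fin.last (n + 1)).castSucc (Fin.last (n + 2)) ⟹
          &(Fin.last (n + 2)) =' &(Fin.last n).castSucc.castSucc)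

theorem realize_labelsFormula (hA : IsTransitiveClass A) (x F : Fin n) :
    (labelsFormula x F).Realize v xs ↔ Labels (xs x).1 (xs F).1 := by
  simp only [labelsFormula, realize_ballFormula hA, realize_bexFormula hA,
    BoundedFormula.realize_inf, BoundedFormula.realize_imp, BoundedFormula.realize_bdEqual,
    realize_memFormula, Function.comp_apply, Term.realize_var, Sum.elim_inr, Fin.snoc_last,
    Fin.snoc_castSucc, Subtype.mk.injEq, exists_prop, Labels]

/-- The formula `IsSmallClosed A w`. -/
def smallClosedFormula (w : Fin n) : LIn.BoundedFormula Empty n :=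
  ballFormula w <| ∀' (subsetFormula (Fin.last (n + 1)) w.castSucc.castSucc ⟹
    labelsFormula (Fin.last n).castSucc (Fin.last (n + 1)) ⟹
      memFormula (Fin.last (n + 1)) w.castSucc.castSucc)

theorem realize_smallClosedFormula (hA : IsTransitiveClass A) (w : Fin n) :
    (smallClosedFormula w).Realize v xs ↔ IsSmallClosed A (xs w).1 := by
  simp only [smallClosedFormula, realize_ballFormula hA, BoundedFormula.realize_all,
    BoundedFormula.realize_imp, realize_subsetFormula hA, realize_labelsFormula hA,
    realize_memFormula, Fin.snoc_last, Fin.snoc_castSucc, Subtype.forall, IsSmallClosed]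

/-- The formula "some small-closed level has `p` as a member". -/
def memSmallClosedLevelFormula (p : Fin n) : LIn.BoundedFormula Empty n :=
  ∃' (memFormula p.castSucc (Fin.last n) ⊓ levelFormula (Fin.last n) ⊓
    smallClosedFormula (Fin.last n))

theorem realize_memSmallClosedLevelFormula (hA : IsTransitiveClass A) (p : Fin n) :
    (memSmallClosedLevelFormula p).Realize v xs ↔
      ∃ w ∈ A, (xs p).1 ∈ w ∧ IsLevel A w ∧ IsSmallClosed A w := by
  simp only [memSmallClosedLevelFormula, BoundedFormula.realize_ex, BoundedFormula.realize_inf,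
    realize_memFormula, realize_levelFormula hA, realize_smallClosedFormula hA, Fin.snoc_last,
    Fin.snoc_castSucc, Subtype.exists, exists_prop, and_assoc]

end Formulas

theorem IsProperEEESets.hasLevels_iff {B : Set ZFSet.{u}} (h : IsProperEEESets A B)
    (hA : IsTransitiveClass A) (hB : IsTransitiveClass B) : HasLevels B ↔ HasLevels A := by
  rw [← realize_hasLevelsSentence hA (xs := default), ← realize_hasLevelsSentence hB]
  exact h.realize_iff hasLevelsSentence default

theorem IsProperEEESets.exists_smallClosed_level_iff {B : Set ZFSet.{u}}
    (h : IsProperEEESets A B) (hA : IsTransitiveClass A) (hB : IsTransitiveClass B) (hx : x ∈ A) :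
    (∃ w ∈ B, x ∈ w ∧ IsLevel B w ∧ IsSmallClosed B w) ↔
      ∃ w ∈ A, x ∈ w ∧ IsLevel A w ∧ IsSmallClosed A w :=
  (realize_memSmallClosedLevelFormula hB (0 : Fin 1)).symm.trans <|
    (h.realize_iff (memSmallClosedLevelFormula 0) fun _ => ⟨x, hx⟩).trans <|
      realize_memSmallClosedLevelFormula hA (0 : Fin 1)

theorem IsProperEEESets.isLevel_vonNeumann (h : IsProperEEESets (Vclass o) A)
    (ho : IsSuccLimit o) (hA : IsTransitiveClass A) : V_ o ∈ A ∧ IsLevel A (V_ o) := by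
  obtain ⟨hsub, hne, -⟩ := id h
  obtain ⟨e, heA, rfl⟩ := hA.exists_rank_eq fun hAo => hne (hsub.antisymm hAo)
  have hlevels := (h.hasLevels_iff (isTransitiveClass_Vclass _) hA).2 (hasLevels_Vclass ho)
  obtain ⟨w, hwA, hw, hrank⟩ := hlevels.exists_isLevel_rank_eq hA heA
  rw [← hrank] at hsub ⊢
  rw [← hw.eq_vonNeumann hA hsub]
  exact ⟨hwA, hw⟩

theorem exists_isInaccessible_of_smallClosed_level (ho : IsSuccLimit o) (hwo : w ∈ Vclass o)
    (hw : IsLevel (Vclass o) w) (hclosed : IsSmallClosed (Vclass o) w)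
    (hω : Ordinal.omega0 < w.rank) :
    ∃ lam : Cardinal.{u}, lam.IsInaccessible ∧ lam.ord = w.rank := by
  have hsub {β : Ordinal.{u}} (hβ : β ≤ o) : Vclass β ⊆ Vclass o := fun _ hx => hx.trans_le hβ
  have hwV := hw.eq_vonNeumann (isTransitiveClass_Vclass o) (hsub hwo.le)
  rw [hwV] at hclosed
  have hsucc := hsub (ho.succ_lt hwo).le
  exact ⟨w.rank.cof, hclosed.isInaccessible_cof hsucc hω,
    hclosed.ord_cof_eq hsucc (Ordinal.one_lt_omega0.trans hω)⟩

theorem IsProperEEESets.exists_isInaccessible_between {κ μ : Cardinal.{u}}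
    (h : IsProperEEESets (Vclass κ.ord) A) (hκ : κ.IsInaccessible) (hA : IsTransitiveClass A)
    (hμ : μ < κ) : ∃ lam < κ, lam.IsInaccessible ∧ μ < lam := by
  have hlim : IsSuccLimit κ.ord := Cardinal.isSuccLimit_ord hκ.aleph0_lt.le
  let ν := max μ Cardinal.aleph0
  have hν : ν.ord < κ.ord := Cardinal.ord_lt_ord.2 (max_lt hμ hκ.aleph0_lt)
  obtain ⟨hVA, hlevel⟩ := h.isLevel_vonNeumann hlim hA
  obtain ⟨w, hwκ, hνw, hw, hclosed⟩ :=
    (h.exists_smallClosed_level_iff (isTransitiveClass_Vclass _) hA (vonNeumann_mem_Vclass.2 hν)).1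
      ⟨V_ κ.ord, hVA, vonNeumann_mem_of_lt hν, hlevel, isSmallClosed_vonNeumann_ord hκ A⟩
  have hνrank : ν.ord < w.rank := by simpa using rank_lt_of_mem hνw
  have hω : Ordinal.omega0 < w.rank :=
    (Cardinal.ord_aleph0 ▸ Cardinal.ord_le_ord.2 (le_max_right μ _)).trans_lt hνrank
  obtain ⟨lam, hlam, hrank⟩ := exists_isInaccessible_of_smallClosed_level hlim hwκ hw hclosed hω
  rw [← hrank, Cardinal.ord_lt_ord] at hνrank
  exact ⟨lam, Cardinal.ord_lt_ord.1 (hrank ▸ hwκ), hlam, (le_max_left _ _).trans_lt hνrank⟩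

theorem successor_inaccessible_no_eee_general {κ : Cardinal.{u}} (hκ : κ.IsInaccessible)
    (hbdd : ∃ μ : Cardinal.{u}, μ < κ ∧
      ∀ lam : Cardinal.{u}, lam < κ → lam.IsInaccessible → lam ≤ μ) :
    ¬∃ A : Set ZFSet.{u}, IsTransitiveClass A ∧ IsProperEEESets (Vclass κ.ord) A := by
  rintro ⟨A, hA, h⟩
  obtain ⟨μ, hμ, hle⟩ := hbdd
  obtain ⟨lam, hlamκ, hlam, hμlam⟩ := h.exists_isInaccessible_between hκ hA hμ
  exact (hle lam hlamκ hlam).not_gt hμlam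

/-- If `κ` is inaccessible and the inaccessibles below `κ` are bounded below
`κ` (`κ` is a "successor inaccessible"), then `(V_κ,∈)` has no proper elementary end extension
`(N,∈)` with `N` transitive. -/
theorem successor_inaccessible_no_eee
    (κ : Cardinal) (hκ : κ.IsInaccessible)
    (hbdd : ∃ μ : Cardinal, μ < κ ∧
      ∀ lam : Cardinal, lam < κ → lam.IsInaccessible → lam ≤ μ) :
    ¬ ∃ N : ZFSet, N.IsTransitive ∧ IsProperEEESets (Vclass κ.ord) N.toSet := by
  rintro ⟨N, hN, h⟩
  exact successor_inaccessible_no_eee_general hκ hbdd ⟨N.toSet, fun _ hx _ hy => hN _ hx hy, h⟩
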